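/- Let {X_k} be a Markov chain on a finite state space S with irreducible transition probability matrix P and stationary distribution π, started from π. Let S⁽²⁾ = { (x,y) : P(x,y) > 0 } with pair transition matrix P⁽²⁾((x,y),(z,w)) = 1{y=z} P(y,w), and let f⁽²⁾ : S⁽²⁾ → [a,b]. Then for every ε > 0, Pr_π( | (1/n) Σ_{k=1}^n f⁽²⁾(X_k, X_{k+1}) − E_π[f⁽²⁾(X_1, X_2)] | ≥ ε ) ≤ 2 exp( −2 n ε² / ( (b−a)² HitT(P⁽²⁾)² ) ). -/

import Mathlib

/-!
The proof is the martingale method. Let `potential P f2 m y` be the expected sum of `f2` over the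
next `m` transitions of the chain started at `y`. Given `X_k`, the conditional expectation of the
total reward, after the next transition `(X_k, X_{k+1}) = (y, z)` is revealed, is a known quantity
plus `f2 (y, z) + potential P f2 m z`, where `m` transitions remain. Hence Hoeffding's lemma,
applied to one transition at a time, bounds the moment generating function of the total reward by
`exp (l n μ + n l² c² / 8)`, where `c` bounds the oscillation over admissible pairs of
`f2 (y, z) + potential P f2 m z` (`expReward_le`, `stationary_mgf_le`), and Chernoff's bound with
`l = ± 4 ε / c²` concludes.

The constant is `c = (b - a) * HitT (pairP P)`, because for any finite chain and `a ≤ f ≤ b`, the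
expected `m`-step rewards from two states `x` and `y` satisfy
`G m x - G m y ≤ (b - a) * E_x[T_y ∧ m]` (`reward_sub_le`): running the chain from `x` until it
hits `y` costs `T_y` steps, each of which changes the difference by at most `b - a`. Irreducibility
is needed to know that the expected hitting times of the pair chain are finite
(`sum_survive_le_of_lt_one`, `exists_survive_pairP_lt_one`), so that `hitExp` is not a junk value.
-/

open Finset

namespace MC

variable {S : Type*}

/-- `q` is a probability distribution on the finite state space `S`. -/
def IsProbVec [Fintype S] (q : S → ℝ) : Prop :=
  (∀ x, 0 ≤ q x) ∧ ∑ x, q x = 1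

/-- `P` is a transition probability matrix (row-stochastic). -/
def IsStochastic [Fintype S] (P : S → S → ℝ) : Prop :=
  (∀ x y, 0 ≤ P x y) ∧ ∀ x, ∑ y, P x y = 1

/-- `n`-step transition probabilities `Pⁿ(x,y)`. -/
def matPow [Fintype S] [DecidableEq S] (P : S → S → ℝ) : ℕ → S → S → ℝ
  | 0 => fun x y => if x = y then 1 else 0
  | n + 1 => fun x y => ∑ z, matPow P n x z * P z y

/-- `P` is irreducible: any state can reach any state. -/
def IsIrreducible [Fintype S] [DecidableEq S] (P : S → S → ℝ) : Prop :=
  ∀ x y, ∃ n, 1 ≤ n ∧ 0 < matPow P n x y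

/-- `survive P y n x = Pr(T_y > n | X_1 = x)`, where
`T_y = inf {n ≥ 0 : X_{n+1} = y}` is the hitting time of `y`. -/
def survive [Fintype S] [DecidableEq S] (P : S → S → ℝ) (y : S) : ℕ → S → ℝ
  | 0 => fun x => if x = y then 0 else 1
  | n + 1 => fun x => if x = y then 0 else ∑ z, P x z * survive P y n z

/-- The expected hitting time `E[T_y | X_1 = x] = ∑_{n ≥ 0} Pr(T_y > n | X_1 = x)`. -/
noncomputable def hitExp [Fintype S] [DecidableEq S] (P : S → S → ℝ) (x y : S) : ℝ :=
  (∑' n, ENNReal.ofReal (survive P y n x)).toReal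

/-- The maximum expected hitting time `HitT(P) = max_{x,y} E[T_y | X_1 = x]`. -/
noncomputable def HitT [Fintype S] [DecidableEq S] (P : S → S → ℝ) : ℝ :=
  ⨆ x, ⨆ y, hitExp P x y

/-- The probability of the cylinder set given by the path `ω = (X_1, …, X_{n+1})`
for the chain with initial distribution `q` and transition matrix `P`. -/
noncomputable def pathProb [Fintype S] (q : S → ℝ) (P : S → S → ℝ) {n : ℕ}
    (ω : Fin (n + 1) → S) : ℝ :=
  q (ω 0) * ∏ i : Fin n, P (ω i.castSucc) (ω i.succ)

/-- `Pr_q(A)` for an event `A` determined by the first `n+1` states `(X_1, …, X_{n+1})`. -/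
noncomputable def chainProb [Fintype S] (q : S → ℝ) (P : S → S → ℝ) (n : ℕ)
    (A : Set (Fin (n + 1) → S)) : ℝ :=
  ∑ ω : Fin (n + 1) → S, A.indicator (pathProb q P) ω

/-- `stepDist q P k` is the distribution of `X_{k+1}` when `X_1 ∼ q`. -/
def stepDist [Fintype S] (q : S → ℝ) (P : S → S → ℝ) : ℕ → S → ℝ
  | 0 => q
  | k + 1 => fun y => ∑ x, stepDist q P k x * P x y

end MC

namespace MC

/-- The state space `S⁽²⁾ = {(x,y) : P(x,y) > 0}` of the pair chain. -/
noncomputable instance pairFintype {S : Type*} [Fintype S] (P : S → S → ℝ) :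
    Fintype {p : S × S // 0 < P p.1 p.2} :=
  Fintype.ofFinite _

/-- The transition matrix `P⁽²⁾((x,y),(z,w)) = 1{y = z} P(y,w)` of the pair chain
`(X_k, X_{k+1})` on `S⁽²⁾ = {(x,y) : P(x,y) > 0}`. -/
def pairP {S : Type*} [DecidableEq S] (P : S → S → ℝ) :
    {p : S × S // 0 < P p.1 p.2} → {p : S × S // 0 < P p.1 p.2} → ℝ :=
  fun c d => if c.val.2 = d.val.1 then P d.val.1 d.val.2 else 0

end MC

namespace MC

/-! ### Hitting times of a finite chain -/

section Generic

variable {T : Type*} [Fintype T] [DecidableEq T] {Q : T → T → ℝ}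

lemma survive_self (y : T) (n : ℕ) : survive Q y n y = 0 := by
  cases n <;> simp [survive]

lemma survive_succ (y : T) (n : ℕ) (x : T) :
    survive Q y (n + 1) x = if x = y then 0 else ∑ z, Q x z * survive Q y n z := rfl

lemma survive_nonneg (hQ : IsStochastic Q) (y : T) (n : ℕ) (x : T) : 0 ≤ survive Q y n x := by
  induction n generalizing x with
  | zero => simp only [survive]; split_ifs <;> norm_num
  | succ n ih =>
    simp only [survive]
    split_ifs
    · exact le_rfl
    · exact Finset.sum_nonneg fun z _ => mul_nonneg (hQ.1 _ _) (ih z)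

lemma survive_le_one (hQ : IsStochastic Q) (y : T) (n : ℕ) (x : T) : survive Q y n x ≤ 1 := by
  induction n generalizing x with
  | zero => simp only [survive]; split_ifs <;> norm_num
  | succ n ih =>
    simp only [survive]
    split_ifs
    · norm_num
    · calc ∑ z, Q x z * survive Q y n z ≤ ∑ z, Q x z * 1 :=
            Finset.sum_le_sum fun z _ => mul_le_mul_of_nonneg_left (ih z) (hQ.1 _ _)
        _ = 1 := by simp [hQ.2]

lemma survive_succ_le (hQ : IsStochastic Q) (y : T) (n : ℕ) (x : T) :
    survive Q y (n + 1) x ≤ survive Q y n x := by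
  induction n generalizing x with
  | zero =>
    by_cases h : x = y
    · subst h; simp [survive_self]
    · simpa [survive, h] using survive_le_one hQ y 1 x
  | succ n ih =>
    rw [survive_succ, survive_succ]
    split_ifs
    · exact le_rfl
    · exact Finset.sum_le_sum fun z _ => mul_le_mul_of_nonneg_left (ih z) (hQ.1 _ _)

lemma survive_antitone (hQ : IsStochastic Q) (y x : T) :
    Antitone fun n => survive Q y n x :=
  antitone_nat_of_succ_le fun n => survive_succ_le hQ y n x

lemma survive_succ_lt_one (hQ : IsStochastic Q) {y x z : T} {n : ℕ} (hxz : 0 < Q x z)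
    (hz : survive Q y n z < 1) : survive Q y (n + 1) x < 1 := by
  simp only [survive]
  split_ifs
  · norm_num
  · calc ∑ z, Q x z * survive Q y n z < ∑ z, Q x z * 1 := by
          refine Finset.sum_lt_sum
            (fun z _ => mul_le_mul_of_nonneg_left (survive_le_one hQ y n z) (hQ.1 _ _))
            ⟨z, Finset.mem_univ _, ?_⟩
          exact mul_lt_mul_of_pos_left hz hxz
      _ = 1 := by simp [hQ.2]

lemma survive_add_le (hQ : IsStochastic Q) {y : T} {N : ℕ} {ρ : ℝ}
    (hρ : ∀ x, survive Q y N x ≤ ρ) (n : ℕ) (x : T) :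
    survive Q y (n + N) x ≤ ρ * survive Q y n x := by
  induction n generalizing x with
  | zero =>
    by_cases h : x = y
    · subst h; simp [survive_self]
    · simpa [survive, h] using hρ x
  | succ n ih =>
    rw [show n + 1 + N = (n + N) + 1 by omega, survive_succ, survive_succ]
    split_ifs
    · simp
    · rw [Finset.mul_sum]
      refine Finset.sum_le_sum fun z _ => ?_
      calc Q x z * survive Q y (n + N) z ≤ Q x z * (ρ * survive Q y n z) :=
            mul_le_mul_of_nonneg_left (ih z) (hQ.1 _ _)
        _ = ρ * (Q x z * survive Q y n z) := by ring

/-- If `y` can be reached from every state, the partial sums `A m` of the survival probabilities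
are bounded by their expected value: with `survive Q y N ≤ ρ < 1` uniformly,
`A m ≤ A (N + m) ≤ N + ρ * A m`, so the bound does not depend on `m`. This gives the finiteness of
the series in `hitExp`, which hence dominates its partial sums. -/
lemma sum_survive_le_of_lt_one (hQ : IsStochastic Q) {y : T}
    (h : ∀ x, ∃ k, survive Q y k x < 1) (m : ℕ) (x : T) :
    ∑ n ∈ Finset.range m, survive Q y n x ≤ hitExp Q x y := by
  choose k hk using h
  set N := Finset.univ.sup k
  have hN : ∀ x, survive Q y N x < 1 := fun x =>
    (survive_antitone hQ y x (Finset.le_sup (Finset.mem_univ x))).trans_lt (hk x)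
  have : Nonempty T := ⟨x⟩
  obtain ⟨x₀, hx₀⟩ := Finite.exists_max (fun x => survive Q y N x)
  set ρ := survive Q y N x₀ with hρ
  have hρ1 : 0 < 1 - ρ := sub_pos.2 (hN x₀)
  have hbound : ∀ m, ∑ n ∈ Finset.range m, survive Q y n x ≤ N / (1 - ρ) := by
    intro m
    rw [le_div_iff₀ hρ1]
    have h1 : ∑ n ∈ Finset.range m, survive Q y n x
        ≤ ∑ n ∈ Finset.range (N + m), survive Q y n x :=
      Finset.sum_le_sum_of_subset_of_nonneg
        (Finset.range_subset_range.2 (by omega)) fun _ _ _ => survive_nonneg hQ y _ x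
    have h2 : ∑ n ∈ Finset.range N, survive Q y n x ≤ N := by
      simpa using Finset.sum_le_card_nsmul (Finset.range N) (fun n => survive Q y n x) 1
        fun n _ => survive_le_one hQ y n x
    have h3 : ∑ n ∈ Finset.range m, survive Q y (N + n) x
        ≤ ρ * ∑ n ∈ Finset.range m, survive Q y n x := by
      rw [Finset.mul_sum]
      refine Finset.sum_le_sum fun n _ => ?_
      rw [add_comm N n]
      exact survive_add_le hQ hx₀ n x
    rw [Finset.sum_range_add] at h1
    linarith
  have hsum : Summable fun n => survive Q y n x :=
    summable_of_sum_range_le (fun n => survive_nonneg hQ y n x) hbound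
  rw [hitExp, ← ENNReal.ofReal_tsum_of_nonneg (fun n => survive_nonneg hQ y n x) hsum,
    ENNReal.toReal_ofReal (tsum_nonneg fun n => survive_nonneg hQ y n x)]
  exact hsum.sum_le_tsum _ fun n _ => survive_nonneg hQ y n x

lemma hitExp_le_HitT (x y : T) : hitExp Q x y ≤ HitT Q :=
  (le_ciSup (f := fun y => hitExp Q x y) (Set.finite_range _).bddAbove y).trans
    (le_ciSup (f := fun x => ⨆ y, hitExp Q x y) (Set.finite_range _).bddAbove x)

/-- `reward Q f m x` is the expected value of `f X_1 + ⋯ + f X_m` given `X_1 = x`. -/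
def reward (Q : T → T → ℝ) (f : T → ℝ) : ℕ → T → ℝ
  | 0 => fun _ => 0
  | m + 1 => fun x => f x + ∑ z, Q x z * reward Q f m z

omit [DecidableEq T] in
lemma reward_add_le (hQ : IsStochastic Q) {f : T → ℝ} {a : ℝ} (hf : ∀ x, a ≤ f x)
    (m : ℕ) (x : T) : reward Q f m x + a ≤ reward Q f (m + 1) x := by
  induction m generalizing x with
  | zero => simpa [reward] using hf x
  | succ m ih =>
    rw [reward, reward]
    have : ∑ z, Q x z * reward Q f m z + a ≤ ∑ z, Q x z * reward Q f (m + 1) z := by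
      calc ∑ z, Q x z * reward Q f m z + a = ∑ z, Q x z * (reward Q f m z + a) := by
            simp [mul_add, Finset.sum_add_distrib, ← Finset.sum_mul, hQ.2]
        _ ≤ _ := Finset.sum_le_sum fun z _ => mul_le_mul_of_nonneg_left (ih z) (hQ.1 _ _)
    linarith

/-- The right-hand side is `(b - a) * E_x[T_y ∧ m]`. -/
lemma reward_sub_le (hQ : IsStochastic Q) {f : T → ℝ} {a b : ℝ} (hf : ∀ x, f x ∈ Set.Icc a b)
    (m : ℕ) (x y : T) :
    reward Q f m x - reward Q f m y ≤ (b - a) * ∑ n ∈ Finset.range m, survive Q y n x := by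
  induction m generalizing x with
  | zero => simp [reward]
  | succ m ih =>
    by_cases h : x = y
    · subst h; simp [survive_self]
    · have h1 : ∑ n ∈ Finset.range (m + 1), survive Q y n x
          = 1 + ∑ z, Q x z * ∑ n ∈ Finset.range m, survive Q y n z := by
        rw [Finset.sum_range_succ', add_comm]
        simp only [survive, h, if_false, Finset.mul_sum]
        rw [Finset.sum_comm]
      have h2 : ∑ z, Q x z * reward Q f m z ≤ reward Q f m y +
          (b - a) * ∑ z, Q x z * ∑ n ∈ Finset.range m, survive Q y n z := by
        calc ∑ z, Q x z * reward Q f m z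
            ≤ ∑ z, Q x z * (reward Q f m y + (b - a) * ∑ n ∈ Finset.range m, survive Q y n z) :=
              Finset.sum_le_sum fun z _ =>
                mul_le_mul_of_nonneg_left (by linarith [ih z]) (hQ.1 _ _)
          _ = _ := by
              simp only [mul_add, Finset.sum_add_distrib, ← Finset.sum_mul, hQ.2, one_mul]
              congr 1
              rw [Finset.mul_sum]
              exact Finset.sum_congr rfl fun z _ => by ring
      have h3 := reward_add_le hQ (fun x => (hf x).1) m y
      have h4 : reward Q f (m + 1) x = f x + ∑ z, Q x z * reward Q f m z := rfl
      rw [h1]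
      linarith [(hf x).2]

end Generic

/-! ### The pair chain -/

section Pair

variable {S : Type*} [Fintype S] [DecidableEq S] {P : S → S → ℝ}

lemma sum_pairP (hP : IsStochastic P) (c : {p : S × S // 0 < P p.1 p.2}) (F : S × S → ℝ) :
    ∑ d, pairP P c d * F d.val = ∑ z, P c.val.2 z * F (c.val.2, z) := by
  have h1 : ∑ d : {p : S × S // 0 < P p.1 p.2}, pairP P c d * F d.val
      = ∑ p : S × S, (if c.val.2 = p.1 then P p.1 p.2 else 0) * F p := by
    refine Finset.sum_of_injOn Subtype.val Subtype.val_injective.injOn (by simp) ?_ ?_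
    · intro p _ hp
      have : P p.1 p.2 = 0 := by
        refine le_antisymm (not_lt.1 fun h => hp ?_) (hP.1 _ _)
        exact ⟨⟨p, h⟩, by simp, rfl⟩
      simp [this]
    · intro d _; rfl
  rw [h1, Fintype.sum_prod_type, Finset.sum_eq_single c.val.2]
  · simp
  · intro x _ hx
    simp [Ne.symm hx]
  · simp

lemma isStochastic_pairP (hP : IsStochastic P) : IsStochastic (pairP P) := by
  refine ⟨fun c d => ?_, fun c => ?_⟩
  · unfold pairP
    split_ifs
    · exact d.2.le
    · exact le_rfl
  · simpa [hP.2] using sum_pairP hP c fun _ => 1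

lemma matPow_succ_left (n : ℕ) (x y : S) :
    matPow P (n + 1) x y = ∑ z, P x z * matPow P n z y := by
  induction n generalizing y with
  | zero => simp [matPow]
  | succ n ih =>
    rw [matPow]
    simp_rw [ih, Finset.sum_mul]
    rw [Finset.sum_comm]
    refine Finset.sum_congr rfl fun z _ => ?_
    rw [matPow, Finset.mul_sum]
    exact Finset.sum_congr rfl fun w _ => by ring

/-- If the original chain can go from the second coordinate of `c` to the first coordinate of `d`
in `k` steps, then the pair chain can go from `c` to `d` in `k + 1` steps. -/
lemma survive_pairP_lt_one (hP : IsStochastic P) (d : {p : S × S // 0 < P p.1 p.2}) (k : ℕ)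
    (c : {p : S × S // 0 < P p.1 p.2}) (h : 0 < matPow P k c.val.2 d.val.1) :
    survive (pairP P) d (k + 1) c < 1 := by
  induction k generalizing c with
  | zero =>
    have hcd : c.val.2 = d.val.1 := by
      by_contra hne
      simp [matPow, hne] at h
    refine survive_succ_lt_one (isStochastic_pairP hP) (z := d) ?_ (by simp [survive_self])
    simpa [pairP, hcd] using d.2
  | succ k ih =>
    rw [matPow_succ_left] at h
    obtain ⟨z, -, hz⟩ := Finset.exists_lt_of_sum_lt (s := Finset.univ) (f := fun _ => (0 : ℝ))
      (by simpa using h)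
    have hPz : 0 < P c.val.2 z :=
      (hP.1 _ _).lt_of_ne fun h0 => by simp [← h0] at hz
    refine survive_succ_lt_one (isStochastic_pairP hP) (z := ⟨(c.val.2, z), hPz⟩) ?_
      (ih _ (pos_of_mul_pos_right hz hPz.le))
    simpa [pairP] using hPz

lemma exists_survive_pairP_lt_one (hP : IsStochastic P) (hirr : IsIrreducible P)
    (c d : {p : S × S // 0 < P p.1 p.2}) : ∃ k, survive (pairP P) d k c < 1 := by
  obtain ⟨k, -, hk⟩ := hirr c.val.2 d.val.1
  exact ⟨k + 1, survive_pairP_lt_one hP d k c hk⟩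

/-- `potential P f2 m y` is the expected sum of `f2` over the first `m` transitions of the chain
started at `y`. -/
def potential (P : S → S → ℝ) (f2 : S × S → ℝ) : ℕ → S → ℝ
  | 0 => fun _ => 0
  | m + 1 => fun y => ∑ z, P y z * (f2 (y, z) + potential P f2 m z)

lemma reward_pairP (hP : IsStochastic P) (f2 : S × S → ℝ) (m : ℕ)
    (c : {p : S × S // 0 < P p.1 p.2}) :
    reward (pairP P) (fun d => f2 d.val) (m + 1) c = f2 c.val + potential P f2 m c.val.2 := by
  induction m generalizing c with
  | zero => simp [reward, potential]
  | succ m ih =>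
    rw [reward]
    simp_rw [ih]
    rw [sum_pairP hP c fun p => f2 p + potential P f2 m p.2]
    rfl

/-- The oscillation bound driving the martingale argument. -/
lemma potential_osc (hP : IsStochastic P) (hirr : IsIrreducible P) {f2 : S × S → ℝ} {a b : ℝ}
    (hf2 : ∀ p : S × S, 0 < P p.1 p.2 → f2 p ∈ Set.Icc a b) (m : ℕ) (p q : S × S)
    (hp : 0 < P p.1 p.2) (hq : 0 < P q.1 q.2) :
    (f2 p + potential P f2 m p.2) - (f2 q + potential P f2 m q.2)
      ≤ (b - a) * HitT (pairP P) := by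
  have h1 := reward_sub_le (isStochastic_pairP hP) (f := fun d => f2 d.val)
    (fun d => hf2 d.val d.2) (m + 1) ⟨p, hp⟩ ⟨q, hq⟩
  rw [reward_pairP hP, reward_pairP hP] at h1
  refine h1.trans (mul_le_mul_of_nonneg_left ?_ ?_)
  · exact (sum_survive_le_of_lt_one (isStochastic_pairP hP)
      (fun c => exists_survive_pairP_lt_one hP hirr c _) _ _).trans (hitExp_le_HitT _ _)
  · linarith [(hf2 p hp).1, (hf2 p hp).2]

/-! ### Moment generating functions -/

open MeasureTheory ProbabilityTheory in
/-- Hoeffding's lemma for a finitely supported distribution `w`, with the range measured on the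
support of `w` only. -/
lemma hoeffding_finite {ι : Type*} [Fintype ι] {w : ι → ℝ} (hw : IsProbVec w) (v : ι → ℝ) {c : ℝ}
    (hv : ∀ i j, 0 < w i → 0 < w j → v i - v j ≤ c) (l : ℝ) :
    ∑ i, w i * Real.exp (l * v i) ≤ Real.exp (l * ∑ i, w i * v i + l ^ 2 * c ^ 2 / 8) := by
  classical
  have hne : (Finset.univ.filter fun i => 0 < w i).Nonempty := by
    by_contra h
    rw [Finset.not_nonempty_iff_eq_empty, Finset.filter_eq_empty_iff] at h
    have : ∑ i, w i ≤ 0 := Finset.sum_nonpos fun i hi => not_lt.1 (h hi)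
    linarith [hw.2]
  obtain ⟨i₀, hi₀, hmin⟩ := Finset.exists_min_image _ v hne
  simp only [Finset.mem_filter, Finset.mem_univ, true_and] at hi₀ hmin
  have hc : 0 ≤ c := by simpa using hv i₀ i₀ hi₀ hi₀
  -- Replacing the values off the support by `v i₀` changes no weighted sum.
  set u : ι → ℝ := fun i => if 0 < w i then v i else v i₀ with hu
  have hwu : ∀ (g : ℝ → ℝ) i, w i * g (v i) = w i * g (u i) := by
    intro g i
    by_cases h : 0 < w i
    · simp [hu, h]
    · simp [le_antisymm (not_lt.1 h) (hw.1 i)]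
  have hur : ∀ i, u i ∈ Set.Icc (v i₀) (v i₀ + c) := by
    intro i
    by_cases h : 0 < w i
    · simp only [hu, h, if_true]
      exact ⟨hmin i h, by linarith [hv i i₀ h hi₀]⟩
    · simp [hu, h, hc]
  let : MeasurableSpace ι := ⊤
  let μ : Measure ι := ∑ i, ENNReal.ofReal (w i) • Measure.dirac i
  have hint : ∀ g : ι → ℝ, ∫ i, g i ∂μ = ∑ i, w i * g i := by
    intro g
    rw [integral_finsetSum_measure]
    · refine Finset.sum_congr rfl fun i _ => ?_
      rw [integral_smul_measure, integral_dirac, ENNReal.toReal_ofReal (hw.1 i), smul_eq_mul]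
    · intro i _
      exact (integrable_dirac (by simp)).smul_measure ENNReal.ofReal_ne_top
  have : IsProbabilityMeasure μ := ⟨by
    simp [μ, ← ENNReal.ofReal_sum_of_nonneg fun i _ => hw.1 i, hw.2]⟩
  have hmgf := (hasSubgaussianMGF_of_mem_Icc (μ := μ) (X := u)
    (measurable_from_top.aemeasurable) (ae_of_all _ hur)).mgf_le l
  rw [mgf, hint, hint] at hmgf
  have h1 : ∑ i, w i * Real.exp (l * v i) = ∑ i, w i * Real.exp (l * u i) :=
    Finset.sum_congr rfl fun i _ => hwu (fun t => Real.exp (l * t)) i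
  have h2 : ∑ i, w i * v i = ∑ i, w i * u i := Finset.sum_congr rfl fun i _ => hwu id i
  rw [h1, h2]
  set m := ∑ i, w i * u i
  have h3 : ∑ i, w i * Real.exp (l * u i)
      = Real.exp (l * m) * ∑ i, w i * Real.exp (l * (u i - m)) := by
    rw [Finset.mul_sum]
    refine Finset.sum_congr rfl fun i _ => ?_
    rw [show l * u i = l * m + l * (u i - m) by ring, Real.exp_add]
    ring
  rw [h3, Real.exp_add]
  refine mul_le_mul_of_nonneg_left (hmgf.trans (le_of_eq ?_)) (Real.exp_pos _).le
  congr 1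
  simp [abs_of_nonneg hc]
  ring

/-- `expReward P f2 l m y` is the expected value of `exp (l * R)`, where `R` is the sum of `f2`
over the first `m` transitions of the chain started at `y`. -/
noncomputable def expReward (P : S → S → ℝ) (f2 : S × S → ℝ) (l : ℝ) : ℕ → S → ℝ
  | 0 => fun _ => 1
  | m + 1 => fun y => ∑ z, P y z * Real.exp (l * f2 (y, z)) * expReward P f2 l m z

omit [DecidableEq S] in
lemma sum_pathProb_exp (q : S → ℝ) (f2 : S × S → ℝ) (l : ℝ) (n : ℕ) :
    ∑ ω : Fin (n + 1) → S, pathProb q P ω *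
        Real.exp (l * ∑ k : Fin n, f2 (ω k.castSucc, ω k.succ))
      = ∑ x, q x * expReward P f2 l n x := by
  induction n generalizing q with
  | zero =>
    rw [← (Fin.consEquiv fun _ => S).sum_comp, Fintype.sum_prod_type]
    simp [pathProb, expReward, Fin.consEquiv]
  | succ n ih =>
    rw [← (Fin.consEquiv fun _ => S).sum_comp, Fintype.sum_prod_type]
    refine Finset.sum_congr rfl fun x _ => ?_
    have hrec : expReward P f2 l (n + 1) x
        = ∑ z, P x z * Real.exp (l * f2 (x, z)) * expReward P f2 l n z := rfl
    rw [hrec, ← ih fun z => P x z * Real.exp (l * f2 (x, z)), Finset.mul_sum]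
    refine Finset.sum_congr rfl fun ω _ => ?_
    simp only [pathProb, Fin.consEquiv, Equiv.coe_fn_mk, Fin.prod_univ_succ (n := n),
      Fin.sum_univ_succ (n := n), Fin.cons_zero, Fin.cons_succ, Fin.castSucc_zero,
      ← Fin.succ_castSucc, mul_add, Real.exp_add]
    ring

variable {f2 : S × S → ℝ} {c : ℝ}

omit [DecidableEq S] in
lemma expReward_le (hP : IsStochastic P)
    (hosc : ∀ (m : ℕ) (p q : S × S), 0 < P p.1 p.2 → 0 < P q.1 q.2 →
      (f2 p + potential P f2 m p.2) - (f2 q + potential P f2 m q.2) ≤ c) (l : ℝ) (m : ℕ) (y : S) :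
    expReward P f2 l m y ≤ Real.exp (l * potential P f2 m y + m * (l ^ 2 * c ^ 2 / 8)) := by
  induction m generalizing y with
  | zero => simp [expReward, potential]
  | succ m ih =>
    have hoeff := hoeffding_finite (w := P y) ⟨hP.1 y, hP.2 y⟩
      (fun z => f2 (y, z) + potential P f2 m z)
      (fun z z' h h' => hosc m (y, z) (y, z') h h') l
    calc expReward P f2 l (m + 1) y
        = ∑ z, P y z * Real.exp (l * f2 (y, z)) * expReward P f2 l m z := rfl
      _ ≤ ∑ z, P y z * Real.exp (l * f2 (y, z)) *
            Real.exp (l * potential P f2 m z + m * (l ^ 2 * c ^ 2 / 8)) :=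
          Finset.sum_le_sum fun z _ => mul_le_mul_of_nonneg_left (ih z)
            (mul_nonneg (hP.1 _ _) (Real.exp_pos _).le)
      _ = (∑ z, P y z * Real.exp (l * (f2 (y, z) + potential P f2 m z))) *
            Real.exp (m * (l ^ 2 * c ^ 2 / 8)) := by
          rw [Finset.sum_mul]
          refine Finset.sum_congr rfl fun z _ => ?_
          rw [mul_add, Real.exp_add, Real.exp_add]
          ring
      _ ≤ Real.exp (l * potential P f2 (m + 1) y + l ^ 2 * c ^ 2 / 8) *
            Real.exp (m * (l ^ 2 * c ^ 2 / 8)) :=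
          mul_le_mul_of_nonneg_right hoeff (Real.exp_pos _).le
      _ = _ := by
          rw [← Real.exp_add]
          congr 1
          push_cast
          ring

omit [DecidableEq S] in
lemma sum_stationary_potential {π : S → ℝ}
    (hstat : ∀ y, ∑ x, π x * P x y = π y) (n : ℕ) :
    ∑ x, π x * potential P f2 n x = n * ∑ x, ∑ z, π x * P x z * f2 (x, z) := by
  induction n with
  | zero => simp [potential]
  | succ n ih =>
    have h : ∑ x, ∑ z, π x * P x z * potential P f2 n z
        = n * ∑ x, ∑ z, π x * P x z * f2 (x, z) := by
      rw [← ih, Finset.sum_comm]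
      exact Finset.sum_congr rfl fun z _ => by rw [← Finset.sum_mul, hstat]
    calc ∑ x, π x * potential P f2 (n + 1) x
        = ∑ x, ∑ z, π x * P x z * f2 (x, z) + ∑ x, ∑ z, π x * P x z * potential P f2 n z := by
          rw [← Finset.sum_add_distrib]
          refine Finset.sum_congr rfl fun x _ => ?_
          rw [potential, Finset.mul_sum, ← Finset.sum_add_distrib]
          exact Finset.sum_congr rfl fun z _ => by ring
      _ = _ := by
          rw [h]
          push_cast
          ring

omit [DecidableEq S] in
/-- The first transition is revealed in one go: Hoeffding's lemma is applied to the joint law of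
`(X_1, X_2)`, so that `n` applications, rather than `n + 1`, suffice. -/
lemma stationary_mgf_le {π : S → ℝ} (hP : IsStochastic P) (hπ : IsProbVec π)
    (hstat : ∀ y, ∑ x, π x * P x y = π y)
    (hosc : ∀ (m : ℕ) (p q : S × S), 0 < P p.1 p.2 → 0 < P q.1 q.2 →
      (f2 p + potential P f2 m p.2) - (f2 q + potential P f2 m q.2) ≤ c) (l : ℝ) (n : ℕ) :
    ∑ x, π x * expReward P f2 l n x ≤
      Real.exp (l * (n * ∑ x, ∑ z, π x * P x z * f2 (x, z)) + n * (l ^ 2 * c ^ 2 / 8)) := by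
  cases n with
  | zero => simp [expReward, hπ.2]
  | succ m =>
    have hw : IsProbVec fun p : S × S => π p.1 * P p.1 p.2 := by
      refine ⟨fun p => mul_nonneg (hπ.1 _) (hP.1 _ _), ?_⟩
      rw [Fintype.sum_prod_type]
      simp [← Finset.mul_sum, hP.2, hπ.2]
    have hoeff := hoeffding_finite hw (fun p => f2 p + potential P f2 m p.2)
      (fun p q hp hq => hosc m p q (pos_of_mul_pos_right hp (hπ.1 _))
        (pos_of_mul_pos_right hq (hπ.1 _))) l
    have hmean : ∑ p : S × S, π p.1 * P p.1 p.2 * (f2 p + potential P f2 m p.2)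
        = ((m + 1 : ℕ) : ℝ) * ∑ x, ∑ z, π x * P x z * f2 (x, z) := by
      rw [← sum_stationary_potential hstat, Fintype.sum_prod_type]
      refine Finset.sum_congr rfl fun x _ => ?_
      rw [potential, Finset.mul_sum]
      exact Finset.sum_congr rfl fun z _ => by ring
    rw [hmean] at hoeff
    calc ∑ x, π x * expReward P f2 l (m + 1) x
        = ∑ p : S × S, π p.1 * P p.1 p.2 * Real.exp (l * f2 p) * expReward P f2 l m p.2 := by
          rw [Fintype.sum_prod_type]
          refine Finset.sum_congr rfl fun x _ => ?_
          rw [expReward, Finset.mul_sum]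
          exact Finset.sum_congr rfl fun z _ => by ring
      _ ≤ ∑ p : S × S, π p.1 * P p.1 p.2 * Real.exp (l * f2 p) *
            Real.exp (l * potential P f2 m p.2 + m * (l ^ 2 * c ^ 2 / 8)) :=
          Finset.sum_le_sum fun p _ => mul_le_mul_of_nonneg_left (expReward_le hP hosc l m p.2)
            (mul_nonneg (hw.1 p) (Real.exp_pos _).le)
      _ = (∑ p : S × S, π p.1 * P p.1 p.2 * Real.exp (l * (f2 p + potential P f2 m p.2))) *
            Real.exp (m * (l ^ 2 * c ^ 2 / 8)) := by
          rw [Finset.sum_mul]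
          refine Finset.sum_congr rfl fun p _ => ?_
          rw [mul_add, Real.exp_add, Real.exp_add]
          ring
      _ ≤ _ := mul_le_mul_of_nonneg_right hoeff (Real.exp_pos _).le
      _ = _ := by
          rw [← Real.exp_add]
          congr 1
          push_cast
          ring

end Pair

end MC

/-! ### The tail bound -/

open MC in
/-- **Nonasymptotic weak law of large numbers for functions of transitions**
(Corollary 1, second part). For a stationary chain (initialized at the stationary
distribution `π`) with irreducible `P` on finite `S`, and `f⁽²⁾` a function on the
transitions `S⁽²⁾ = {(x,y) : P(x,y) > 0}` with values in `[a,b]` (given as a function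
on `S × S` whose values on `S⁽²⁾` lie in `[a,b]`), for every `ε > 0`,
`Pr_π(|(1/n) ∑_{k=1}^n f⁽²⁾(X_k,X_{k+1}) − E_π[f⁽²⁾(X_1,X_2)]| ≥ ε)
  ≤ 2 exp(−2nε²/((b−a)²HitT(P⁽²⁾)²))`. -/
theorem markov_lln_hoeffding_pairs {S : Type*} [Fintype S] [DecidableEq S]
    (P : S → S → ℝ) (hP : IsStochastic P) (hirr : IsIrreducible P)
    (π : S → ℝ) (hπ : IsProbVec π) (hstat : ∀ y, ∑ x, π x * P x y = π y)
    (f2 : S × S → ℝ) (a b : ℝ) (hf2 : ∀ p : S × S, 0 < P p.1 p.2 → f2 p ∈ Set.Icc a b)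
    (n : ℕ) (ε : ℝ) (hε : 0 < ε) :
    chainProb π P n
      {ω | ε ≤ |(1 / n : ℝ) * ∑ k : Fin n, f2 (ω k.castSucc, ω k.succ) -
        ∑ x, ∑ z, π x * P x z * f2 (x, z)|} ≤
      2 * Real.exp (-(2 * n * ε ^ 2) / ((b - a) ^ 2 * HitT (pairP P) ^ 2)) := by
  classical
  set μ := ∑ x, ∑ z, π x * P x z * f2 (x, z) with hμ
  set c := (b - a) * HitT (pairP P) with hc
  have hosc := potential_osc hP hirr hf2
  -- The minimizer of the Chernoff exponent. If `c = 0`, the junk value `l = 0` yields the trivial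
  -- bound `2`, which is also the value of the right-hand side.
  set l := 4 * ε / c ^ 2 with hl
  have hl0 : 0 ≤ l := by positivity
  have hexp : n * (l ^ 2 * c ^ 2 / 8) - l * (n * ε)
      = -(2 * n * ε ^ 2) / ((b - a) ^ 2 * HitT (pairP P) ^ 2) := by
    rw [show (b - a) ^ 2 * HitT (pairP P) ^ 2 = c ^ 2 by rw [hc]; ring, hl]
    by_cases h : c = 0
    · simp [h]
    · field_simp
      ring
  have hpath : ∀ ω : Fin (n + 1) → S, 0 ≤ pathProb π P ω := fun ω =>
    mul_nonneg (hπ.1 _) (Finset.prod_nonneg fun i _ => hP.1 _ _)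
  let R : (Fin (n + 1) → S) → ℝ := fun ω => ∑ k : Fin n, f2 (ω k.castSucc, ω k.succ)
  have hmgf : ∀ t : ℝ, ∑ ω : Fin (n + 1) → S, pathProb π P ω * Real.exp (t * R ω) ≤
      Real.exp (t * (n * μ) + n * (t ^ 2 * c ^ 2 / 8)) := fun t =>
    (sum_pathProb_exp π f2 t n).trans_le (stationary_mgf_le hP hπ hstat hosc t n)
  -- For `n = 0` the junk value `1 / 0 = 0` is harmless, as both exponents below vanish.
  have hpt : ∀ ω : Fin (n + 1) → S,
      Set.indicator {ω : Fin (n + 1) → S | ε ≤ |(1 / n : ℝ) * R ω - μ|} (pathProb π P) ω ≤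
      Real.exp (-(l * (n * μ)) - l * (n * ε)) * (pathProb π P ω * Real.exp (l * R ω)) +
      Real.exp (l * (n * μ) - l * (n * ε)) * (pathProb π P ω * Real.exp (-l * R ω)) := by
    intro ω
    have e1 : Real.exp (-(l * (n * μ)) - l * (n * ε)) * (pathProb π P ω * Real.exp (l * R ω))
        = pathProb π P ω * Real.exp (l * (R ω - n * μ - n * ε)) := by
      rw [mul_left_comm, ← Real.exp_add]
      congr 2
      ring
    have e2 : Real.exp (l * (n * μ) - l * (n * ε)) * (pathProb π P ω * Real.exp (-l * R ω))
        = pathProb π P ω * Real.exp (l * (-(R ω - n * μ) - n * ε)) := by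
      rw [mul_left_comm, ← Real.exp_add]
      congr 2
      ring
    rw [e1, e2]
    have p1 := mul_nonneg (hpath ω) (Real.exp_pos (l * (R ω - n * μ - n * ε))).le
    have p2 := mul_nonneg (hpath ω) (Real.exp_pos (l * (-(R ω - n * μ) - n * ε))).le
    by_cases hω : ω ∈ {ω : Fin (n + 1) → S | ε ≤ |(1 / n : ℝ) * R ω - μ|}
    · rw [Set.indicator_of_mem hω]
      have key : 0 ≤ R ω - n * μ - n * ε ∨ 0 ≤ -(R ω - n * μ) - n * ε := by
        rcases Nat.eq_zero_or_pos n with h0 | hn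
        · subst h0
          left
          simp [R]
        · have hn' : (0 : ℝ) < n := by exact_mod_cast hn
          have hR : R ω - n * μ = n * ((1 / n : ℝ) * R ω - μ) := by
            field_simp
          rw [hR]
          rcases le_abs.1 (show ε ≤ |(1 / n : ℝ) * R ω - μ| from hω) with h | h
          · left
            nlinarith
          · right
            nlinarith
      rcases key with h | h
      · have := mul_le_mul_of_nonneg_left (Real.one_le_exp (mul_nonneg hl0 h)) (hpath ω)
        linarith
      · have := mul_le_mul_of_nonneg_left (Real.one_le_exp (mul_nonneg hl0 h)) (hpath ω)
        linarith
    · rw [Set.indicator_of_notMem hω]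
      linarith
  have h1 := mul_le_mul_of_nonneg_left (hmgf l)
    (Real.exp_pos (-(l * (n * μ)) - l * (n * ε))).le
  have h2 := mul_le_mul_of_nonneg_left (hmgf (-l))
    (Real.exp_pos (l * (n * μ) - l * (n * ε))).le
  rw [← Real.exp_add,
    show -(l * (n * μ)) - l * (n * ε) + (l * (n * μ) + n * (l ^ 2 * c ^ 2 / 8))
      = n * (l ^ 2 * c ^ 2 / 8) - l * (n * ε) by ring, hexp] at h1
  rw [← Real.exp_add,
    show l * (n * μ) - l * (n * ε) + (-l * (n * μ) + n * ((-l) ^ 2 * c ^ 2 / 8))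
      = n * (l ^ 2 * c ^ 2 / 8) - l * (n * ε) by ring, hexp] at h2
  refine (Finset.sum_le_sum fun ω _ => hpt ω).trans ?_
  rw [Finset.sum_add_distrib, ← Finset.mul_sum, ← Finset.mul_sum]
  linarith
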